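/- Let P be a finite simple graph and let S be an independent set of non-isolated vertices of P such that |S| − |N(S)| ≥ |S'| − |N(S')| (as integers) for every independent set S' of non-isolated vertices of P. Then every non-isolated vertex of P lying in R = V(P) \ N[S] has at least one neighbor in R; in other words, a vertex of R that has no neighbor in R must be isolated in P. -/

import Mathlib

open Finset

/-!
If a vertex `v` outside `N[S]` has all its neighbors in `N[S]`, then they all lie in `N(S)`, because
a neighbor in `S` would put `v` in `N(S)`. Adding `v` to `S` therefore preserves independence and
enlarges `S` without enlarging `N(S)`, so a non-isolated such `v` contradicts the maximality of
`|S| - |N(S)|`.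
-/

theorem isIndepSet_iff_forall_mem {V : Type*} {G : SimpleGraph V} {S : Set V} :
    G.IsIndepSet S ↔ ∀ u ∈ S, ∀ v ∈ S, ¬G.Adj u v :=
  ⟨fun h _ hu _ hv huv => h hu hv huv.ne huv, fun h u hu v hv _ => h u hu v hv⟩

section Surplus

variable {V : Type*} [DecidableEq V] (G : SimpleGraph V) [G.LocallyFinite]

/-- The open neighborhood `N(S)`, the set of vertices adjacent to at least one vertex of `S`. It may
meet `S`. Local finiteness of `G` makes it a finite set. -/
def openNeighborFinset (S : Finset V) : Finset V :=
  S.biUnion fun s => G.neighborFinset s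

/-- The surplus `|S| - |N(S)|` of a finite set of vertices, the quantity that critical independent
sets maximize. It is an integer because it may be negative. -/
def surplus (S : Finset V) : ℤ :=
  (#S : ℤ) - #(openNeighborFinset G S)

variable {G} {S : Finset V} {v w : V}

theorem mem_openNeighborFinset : w ∈ openNeighborFinset G S ↔ ∃ s ∈ S, G.Adj s w := by
  simp only [openNeighborFinset, mem_biUnion, SimpleGraph.mem_neighborFinset]

theorem isIndepSet_insert_of_notMem_openNeighborFinset (hS : G.IsIndepSet S)
    (hv : v ∉ openNeighborFinset G S) : G.IsIndepSet (insert v S : Finset V) := by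
  have hvS : ∀ s ∈ S, ¬G.Adj s v := fun s hs hsv => hv (mem_openNeighborFinset.2 ⟨s, hs, hsv⟩)
  rw [coe_insert]
  exact hS.insert fun s hs _ => ⟨fun hvs => hvS s hs hvs.symm, hvS s hs⟩

theorem neighborFinset_subset_openNeighborFinset (hv : v ∉ openNeighborFinset G S)
    (hN : ∀ w, G.Adj v w → w ∈ S ∪ openNeighborFinset G S) :
    G.neighborFinset v ⊆ openNeighborFinset G S := by
  intro w hw
  have hvw : G.Adj v w := (G.mem_neighborFinset v w).1 hw
  have hwS : w ∉ S := fun hwS => hv (mem_openNeighborFinset.2 ⟨w, hwS, hvw.symm⟩)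
  exact (mem_union.1 (hN w hvw)).resolve_left hwS

theorem surplus_insert_of_neighborFinset_subset (hv : v ∉ S)
    (hN : G.neighborFinset v ⊆ openNeighborFinset G S) :
    surplus G (insert v S) = surplus G S + 1 := by
  have hNeq : openNeighborFinset G (insert v S) = openNeighborFinset G S :=
    biUnion_insert.trans (union_eq_right.2 hN)
  rw [surplus, surplus, hNeq, card_insert_of_notMem hv]
  push_cast
  ring

theorem stmt8_general (hInd : G.IsIndepSet S) (hNonIso : (S : Set V) ⊆ G.support)
    (hMax : ∀ T : Finset V, G.IsIndepSet T → (T : Set V) ⊆ G.support → surplus G T ≤ surplus G S)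
    (hv : v ∉ S ∪ openNeighborFinset G S) (hvNonIso : v ∈ G.support) :
    ∃ w ∉ S ∪ openNeighborFinset G S, G.Adj v w := by
  by_contra! hN
  obtain ⟨hvS, hvN⟩ := notMem_union.1 hv
  have hNv : G.neighborFinset v ⊆ openNeighborFinset G S :=
    neighborFinset_subset_openNeighborFinset hvN fun w hvw => by_contra fun hw => hN w hw hvw
  have hle : surplus G (insert v S) ≤ surplus G S :=
    hMax _ (isIndepSet_insert_of_notMem_openNeighborFinset hInd hvN) <| by
      rw [coe_insert]
      exact Set.insert_subset hvNonIso hNonIso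
  have hsucc : surplus G (insert v S) = surplus G S + 1 :=
    surplus_insert_of_neighborFinset_subset hvS hNv
  lia

end Surplus

/-- With `S` an independent set of non-isolated vertices maximizing
`|S| − |N(S)|`, every non-isolated vertex of `P` lying in `R = V(P) \ N[S]` has a
neighbor in `R`. -/
theorem stmt8 {V : Type*} [Fintype V] [DecidableEq V]
    (P : SimpleGraph V) [DecidableRel P.Adj] (S : Finset V)
    (hInd : ∀ u ∈ S, ∀ v ∈ S, ¬ P.Adj u v)
    (hNonIso : ∀ v ∈ S, ∃ w, P.Adj v w)
    (hMax : ∀ S' : Finset V, (∀ u ∈ S', ∀ v ∈ S', ¬ P.Adj u v) →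
      (∀ v ∈ S', ∃ w, P.Adj v w) →
      (S'.card : ℤ) - ((S'.biUnion (fun s => P.neighborFinset s)).card : ℤ) ≤
        (S.card : ℤ) - ((S.biUnion (fun s => P.neighborFinset s)).card : ℤ))
    (R : Finset V)
    (hR : R = Finset.univ \ (S ∪ S.biUnion (fun s => P.neighborFinset s))) :
    ∀ v ∈ R, (∃ w, P.Adj v w) → ∃ w ∈ R, P.Adj v w := by
  simp only [hR, mem_sdiff, mem_univ, true_and]
  exact fun v => stmt8_general (isIndepSet_iff_forall_mem.2 hInd) hNonIso
    fun T hT => hMax T (isIndepSet_iff_forall_mem.1 hT)
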